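/- Let δ > 0, ε > 0 be real numbers and n a positive natural number. There is a constant K = K(δ, n, ε) with the following property. Let X be a geodesic metric space with δ-slim triangles and let h be an isometry of X whose stable translation length satisfies lim_{m→∞} d(y, h^m y)/m ≥ ε for every y ∈ X. If x and x' are two points of X with d(x, h·x) ≤ 2nδ and d(x', h·x') ≤ 2nδ, then the Hausdorff distance between the orbits {h^m·x : m ∈ ℤ} and {h^m·x' : m ∈ ℤ} is at most K. -/

import Mathlib

/-!
The orbit `m ↦ h ^ m x` is bi-Lipschitz with constants depending only on `δ, ε, n`: it is
`2nδ`-Lipschitz, and by subadditivity the stable translation length bounds `dist x (h ^ m x) / m`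
from below.

Half of the Morse lemma suffices: the range of a bi-Lipschitz map `o : ℤ → X` is quasiconvex.
Bisecting the index interval shows that a geodesic from `o i` to `o j` is within
`C + δ * ⌈log₂ |i - j|⌉` of the range. At a point `p` of the geodesic farthest from the range, at
distance `R` say, this is applied to points of the range close to the points of the geodesic at
distance `2 * R` from `p` (or to the endpoint, if there is no such point). This gives
`R ≤ δ * log₂ R + const`, which bounds `R`.

Finally, for `N` large, the midpoint of a geodesic from `x` to `h ^ N x` is far from the geodesics
joining `x` to `x'` and `h ^ N x` to `h ^ N x'`, so by slimness of the quadrilateral it is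
`2δ`-close to a geodesic from `x'` to `h ^ N x'`. Quasiconvexity of both orbits then makes one point
of the first orbit uniformly close to one point of the second, and translating by powers of `h`
gives the claim for all points.
-/

open Metric Filter

/-- `f` parametrizes a geodesic segment from `x` to `y` by arc length on `[0, dist x y]`. -/
def IsGeodesicSegment {X : Type*} [MetricSpace X] (f : ℝ → X) (x y : X) : Prop :=
  f 0 = x ∧ f (dist x y) = y ∧
    ∀ s ∈ Set.Icc (0 : ℝ) (dist x y), ∀ t ∈ Set.Icc (0 : ℝ) (dist x y),
      dist (f s) (f t) = |s - t|

/-- `σ` is (the image of) a geodesic segment joining `x` to `y`. -/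
def IsGeodesic {X : Type*} [MetricSpace X] (σ : Set X) (x y : X) : Prop :=
  ∃ f : ℝ → X, IsGeodesicSegment f x y ∧ σ = f '' Set.Icc 0 (dist x y)

/-- `X` is a geodesic metric space: any two points are joined by a geodesic segment. -/
def GeodesicSpace (X : Type*) [MetricSpace X] : Prop :=
  ∀ x y : X, ∃ σ : Set X, IsGeodesic σ x y

/-- Triangles in `X` are δ-slim: each side lies in the closed δ-neighborhood of the
union of the other two sides. -/
def SlimTriangles (X : Type*) [MetricSpace X] (δ : ℝ) : Prop :=
  ∀ x y z : X, ∀ s₁ s₂ s₃ : Set X,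
    IsGeodesic s₁ x y → IsGeodesic s₂ y z → IsGeodesic s₃ z x →
    ∀ p ∈ s₁, ∃ q ∈ s₂ ∪ s₃, dist p q ≤ δ

section Geodesics

variable {X : Type*} [MetricSpace X] {σ : Set X} {x y p : X}

lemma IsGeodesicSegment.dist_left {f : ℝ → X} (hf : IsGeodesicSegment f x y) {t : ℝ}
    (ht : t ∈ Set.Icc 0 (dist x y)) : dist x (f t) = t := by
  conv_lhs => rw [← hf.1]
  rw [hf.2.2 0 ⟨le_rfl, dist_nonneg⟩ t ht, zero_sub, abs_neg, abs_of_nonneg ht.1]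

lemma IsGeodesicSegment.dist_right {f : ℝ → X} (hf : IsGeodesicSegment f x y) {t : ℝ}
    (ht : t ∈ Set.Icc 0 (dist x y)) : dist (f t) y = dist x y - t := by
  conv_lhs => rw [← hf.2.1]
  rw [hf.2.2 t ht _ ⟨dist_nonneg, le_rfl⟩, abs_sub_comm, abs_of_nonneg (sub_nonneg.2 ht.2)]

lemma IsGeodesicSegment.isGeodesic_image_Icc {f : ℝ → X} (hf : IsGeodesicSegment f x y) {t : ℝ}
    (ht : t ∈ Set.Icc 0 (dist x y)) : IsGeodesic (f '' Set.Icc 0 t) x (f t) := by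
  have hsub : Set.Icc 0 t ⊆ Set.Icc 0 (dist x y) := Set.Icc_subset_Icc_right ht.2
  rw [← hf.dist_left ht] at hsub
  refine ⟨f, ⟨hf.1, by rw [hf.dist_left ht], fun r hr s hs => hf.2.2 r (hsub hr) s (hsub hs)⟩, ?_⟩
  rw [hf.dist_left ht]

lemma IsGeodesicSegment.continuousOn {f : ℝ → X} (hf : IsGeodesicSegment f x y) :
    ContinuousOn f (Set.Icc 0 (dist x y)) := by
  refine (LipschitzOnWith.of_dist_le_mul (K := 1) fun s hs t ht => ?_).continuousOn
  rw [hf.2.2 s hs t ht, Real.dist_eq, NNReal.coe_one, one_mul]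

namespace IsGeodesic

lemma isCompact (hσ : IsGeodesic σ x y) : IsCompact σ := by
  obtain ⟨f, hf, rfl⟩ := hσ
  exact isCompact_Icc.image_of_continuousOn hf.continuousOn

lemma right_mem (hσ : IsGeodesic σ x y) : y ∈ σ := by
  obtain ⟨f, hf, rfl⟩ := hσ
  exact ⟨dist x y, ⟨dist_nonneg, le_rfl⟩, hf.2.1⟩

lemma dist_left_le (hσ : IsGeodesic σ x y) (hp : p ∈ σ) : dist x p ≤ dist x y := by
  obtain ⟨f, hf, rfl⟩ := hσ
  obtain ⟨t, ht, rfl⟩ := hp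
  exact (hf.dist_left ht).trans_le ht.2

lemma eq_of_mem (hσ : IsGeodesic σ x x) (hp : p ∈ σ) : x = p :=
  dist_le_zero.1 ((hσ.dist_left_le hp).trans_eq (dist_self x))

lemma symm (hσ : IsGeodesic σ x y) : IsGeodesic σ y x := by
  obtain ⟨f, hf, rfl⟩ := hσ
  have hmaps : ∀ t ∈ Set.Icc 0 (dist x y), dist x y - t ∈ Set.Icc 0 (dist x y) :=
    fun t ht => ⟨sub_nonneg.2 ht.2, sub_le_self _ ht.1⟩
  refine ⟨fun t => f (dist x y - t), ⟨?_, ?_, ?_⟩, ?_⟩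
  · simpa using hf.2.1
  · simpa [dist_comm y x] using hf.1
  · intro s hs t ht
    rw [dist_comm y x] at hs ht
    rw [hf.2.2 _ (hmaps s hs) _ (hmaps t ht), sub_sub_sub_cancel_left, abs_sub_comm]
  · rw [dist_comm y x]
    refine Set.Subset.antisymm ?_ (Set.image_subset_iff.2 fun t ht => ⟨_, hmaps t ht, rfl⟩)
    exact Set.image_subset_iff.2 fun t ht => ⟨_, hmaps t ht, by simp⟩

lemma exists_midpoint (hσ : IsGeodesic σ x y) :
    ∃ p ∈ σ, dist x p = dist x y / 2 ∧ dist p y = dist x y / 2 := by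
  obtain ⟨f, hf, rfl⟩ := hσ
  have hmem : dist x y / 2 ∈ Set.Icc 0 (dist x y) :=
    ⟨div_nonneg dist_nonneg zero_le_two, half_le_self dist_nonneg⟩
  exact ⟨_, ⟨_, hmem, rfl⟩, hf.dist_left hmem, by rw [hf.dist_right hmem, sub_half]⟩

lemma exists_truncation (hσ : IsGeodesic σ x y) (hp : p ∈ σ) {r : ℝ} (hr : 0 ≤ r) :
    ∃ z, ∃ τ ⊆ σ, IsGeodesic τ x z ∧ p ∈ τ ∧ dist p z ≤ r ∧ (z = y ∨ dist p z = r) := by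
  rcases le_total (dist p y) r with hpy | hpy
  · exact ⟨y, σ, subset_rfl, hσ, hp, hpy, Or.inl rfl⟩
  obtain ⟨f, hf, rfl⟩ := hσ
  obtain ⟨t, ht, rfl⟩ := hp
  rw [hf.dist_right ht] at hpy
  have htr : t + r ∈ Set.Icc 0 (dist x y) := ⟨add_nonneg ht.1 hr, by linarith⟩
  have hdist : dist (f t) (f (t + r)) = r := by
    rw [hf.2.2 t ht _ htr, sub_add_cancel_left, abs_neg, abs_of_nonneg hr]
  exact ⟨f (t + r), f '' Set.Icc 0 (t + r), Set.image_mono (Set.Icc_subset_Icc_right htr.2),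
    hf.isGeodesic_image_Icc htr, ⟨t, ⟨ht.1, le_add_of_nonneg_right hr⟩, rfl⟩, hdist.le,
    Or.inr hdist⟩

end IsGeodesic

lemma SlimTriangles.nonneg {δ : ℝ} (hslim : SlimTriangles X δ) (hσ : IsGeodesic σ x x) : 0 ≤ δ := by
  obtain ⟨q, -, hq⟩ := hslim x x x σ σ σ hσ hσ hσ x hσ.right_mem
  exact dist_nonneg.trans hq

lemma SlimTriangles.exists_dist_le_of_quadrilateral {δ : ℝ} (hslim : SlimTriangles X δ)
    (hX : GeodesicSpace X) {u v : X} {τ₁ τ₂ τ₃ : Set X} (hσ : IsGeodesic σ x y)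
    (h₁ : IsGeodesic τ₁ x u) (h₂ : IsGeodesic τ₂ u v) (h₃ : IsGeodesic τ₃ y v) (hp : p ∈ σ) :
    ∃ q, dist p q ≤ 2 * δ ∧ (q ∈ τ₁ ∨ q ∈ τ₂ ∨ q ∈ τ₃) := by
  obtain ⟨ρ, hρ⟩ := hX y u
  obtain ⟨q, hq | hq, hpq⟩ := hslim x y u σ ρ τ₁ hσ hρ h₁.symm p hp
  · obtain ⟨r, hr, hqr⟩ := hslim y u v ρ τ₂ τ₃ hρ h₂ h₃.symm q hq
    exact ⟨r, by linarith [dist_triangle p q r], Or.inr hr⟩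
  · exact ⟨q, by linarith [(dist_nonneg : 0 ≤ dist p q)], Or.inl hq⟩

end Geodesics

section Quasiconvex

variable {X : Type*} [MetricSpace X] {δ : ℝ} {S : Set X}

/-- `S` is `R`-quasiconvex: every geodesic with endpoints in `S` lies in the closed
`R`-neighborhood of `S`. Neighborhoods are measured by `infDist`, so the distance to `S` need not be
attained. -/
def IsQuasiconvex (R : ℝ) (S : Set X) : Prop :=
  ∀ x ∈ S, ∀ y ∈ S, ∀ σ, IsGeodesic σ x y → ∀ p ∈ σ, infDist p S ≤ R

lemma IsQuasiconvex.exists_dist_lt {R R' r : ℝ} {S' : Set X} (hS : IsQuasiconvex R S)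
    (hS' : IsQuasiconvex R' S') (hX : GeodesicSpace X) (hslim : SlimTriangles X δ) {x y x' y' : X}
    (hx : x ∈ S) (hy : y ∈ S) (hx' : x' ∈ S') (hy' : y' ∈ S')
    (hxx' : 2 * (2 * δ + dist x x') < dist x y) (hyy' : 2 * (2 * δ + dist y y') < dist x y)
    (hr : R + R' + 2 * δ < r) : ∃ s ∈ S, ∃ s' ∈ S', dist s s' < r := by
  obtain ⟨σ, hσ⟩ := hX x y
  obtain ⟨τ₁, h₁⟩ := hX x x'
  obtain ⟨τ₂, h₂⟩ := hX x' y'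
  obtain ⟨τ₃, h₃⟩ := hX y y'
  obtain ⟨p, hp, hxp, hpy⟩ := hσ.exists_midpoint
  obtain ⟨q, hpq, hq | hq | hq⟩ := hslim.exists_dist_le_of_quadrilateral hX hσ h₁ h₂ h₃ hp
  · linarith [h₁.dist_left_le hq, dist_triangle_right x p q]
  · obtain ⟨η, hη, hηr⟩ : ∃ η > 0, R + R' + 2 * δ + 2 * η = r :=
      ⟨(r - (R + R' + 2 * δ)) / 2, by linarith, by ring⟩
    obtain ⟨s, hs, hps⟩ := (infDist_lt_iff ⟨x, hx⟩).1
      ((hS x hx y hy σ hσ p hp).trans_lt (lt_add_of_pos_right R hη))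
    obtain ⟨s', hs', hqs'⟩ := (infDist_lt_iff ⟨x', hx'⟩).1
      ((hS' x' hx' y' hy' τ₂ h₂ q hq).trans_lt (lt_add_of_pos_right R' hη))
    exact ⟨s, hs, s', hs', by linarith [dist_triangle4 s p q s', dist_comm s p]⟩
  · linarith [h₃.dist_left_le hq, dist_triangle p q y, dist_comm q y]

lemma exists_mem_forall_geodesic_infDist_sub_one_le (hS : S.Nonempty) {p u : X}
    (hup : infDist u S ≤ infDist p S) (hu : u ∈ S ∨ 2 * infDist p S ≤ dist p u) :
    ∃ s ∈ S, dist u s ≤ infDist p S + 1 ∧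
      ∀ τ, IsGeodesic τ u s → ∀ q ∈ τ, infDist p S - 1 ≤ dist p q := by
  rcases hu with hu | hu
  · refine ⟨u, hu, by linarith [dist_self u, infDist_nonneg (x := p) (s := S)], fun τ hτ q hq => ?_⟩
    rw [← hτ.eq_of_mem hq]
    linarith [infDist_le_dist_of_mem (x := p) hu]
  · obtain ⟨s, hs, hus⟩ := (infDist_lt_iff hS).1 (hup.trans_lt (lt_add_one _))
    refine ⟨s, hs, hus.le, fun τ hτ q hq => ?_⟩
    linarith [hτ.dist_left_le hq, dist_triangle_right p u q]

lemma IsGeodesic.infDist_le_of_forall_infDist_le {σ : Set X} {x y p : X} {B : ℝ}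
    (hσ : IsGeodesic σ x y) (hX : GeodesicSpace X) (hslim : SlimTriangles X δ)
    (hx : x ∈ S) (hy : y ∈ S) (hp : p ∈ σ) (hmax : ∀ q ∈ σ, infDist q S ≤ infDist p S)
    (hB : ∀ a ∈ S, ∀ b ∈ S, dist a b ≤ 6 * infDist p S + 2 →
      ∀ τ, IsGeodesic τ a b → ∀ q ∈ τ, infDist q S ≤ B) :
    infDist p S ≤ max 1 B + 2 * δ := by
  have hr : 0 ≤ 2 * infDist p S := mul_nonneg zero_le_two infDist_nonneg
  obtain ⟨v, τ, hτσ, hτ, hpτ, hpv, hv⟩ := hσ.exists_truncation hp hr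
  obtain ⟨u, ρ, hρτ, hρ, hpρ, hpu, hu⟩ := hτ.symm.exists_truncation hpτ hr
  obtain ⟨a, ha, hua, hfar_a⟩ := exists_mem_forall_geodesic_infDist_sub_one_le ⟨x, hx⟩
    (hmax u (hτσ (hρτ hρ.right_mem))) (hu.imp (fun hux : u = x => hux ▸ hx) Eq.ge)
  obtain ⟨b, hb, hvb, hfar_b⟩ := exists_mem_forall_geodesic_infDist_sub_one_le ⟨x, hx⟩
    (hmax v (hτσ hτ.right_mem)) (hv.imp (fun hvy : v = y => hvy ▸ hy) Eq.ge)
  have hab : dist a b ≤ 6 * infDist p S + 2 := by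
    linarith [dist_triangle4 a u v b, dist_triangle_left u v p, dist_comm a u]
  obtain ⟨τ₁, h₁⟩ := hX u a
  obtain ⟨τ₂, h₂⟩ := hX a b
  obtain ⟨τ₃, h₃⟩ := hX v b
  obtain ⟨q, hpq, hq | hq | hq⟩ := hslim.exists_dist_le_of_quadrilateral hX hρ.symm h₁ h₂ h₃ hpρ
  · linarith [hfar_a τ₁ h₁ q hq, le_max_left 1 B]
  · linarith [hB a ha b hb hab τ₂ h₂ q hq, le_max_right 1 B,
      infDist_le_infDist_add_dist (s := S) (x := p) (y := q)]
  · linarith [hfar_b τ₃ h₃ q hq, le_max_left 1 B]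

end Quasiconvex

lemma exists_forall_le_of_le_add_mul_logb {a : ℝ} (ha : 0 < a) (b c δ β : ℝ) :
    ∃ R₀ : ℝ, ∀ R, R ≤ c + δ * Real.logb β (a * R + b) → R ≤ R₀ := by
  have hlog : (fun R => Real.log (a * R + b)) =o[atTop] (id : ℝ → ℝ) := by
    have htop : Tendsto (fun R => a * R + b) atTop atTop :=
      tendsto_atTop_add_const_right _ b (tendsto_id.const_mul_atTop ha)
    refine (Real.isLittleO_log_id_atTop.comp_tendsto htop).trans_isBigO ?_
    exact ((Asymptotics.isBigO_refl id atTop).const_mul_left a).add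
      (Asymptotics.isLittleO_const_id_atTop b).isBigO
  have hhalf := (hlog.const_mul_left (δ / Real.log β)).bound one_half_pos
  obtain ⟨R₀, hR₀⟩ := eventually_atTop.1 (hhalf.and (eventually_gt_atTop (max 0 (2 * c))))
  refine ⟨R₀, fun R hR => le_of_not_gt fun hlt => ?_⟩
  obtain ⟨hle, hgt⟩ := hR₀ R hlt.le
  obtain ⟨hpos, hc⟩ := max_lt_iff.1 hgt
  rw [id, Real.norm_eq_abs, Real.norm_eq_abs, abs_of_pos hpos, div_mul_comm, mul_comm] at hle
  have hlogb := (le_abs_self (δ * Real.logb β (a * R + b))).trans hle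
  linarith

section BiLipschitz

open scoped NNReal

variable {X : Type*} [MetricSpace X] {δ : ℝ} {C K : ℝ≥0} {o : ℤ → X}

lemma infDist_range_le_of_abs_sub_le_two_pow (hX : GeodesicSpace X) (hslim : SlimTriangles X δ)
    (hC : LipschitzWith C o) (k : ℕ) {i j : ℤ} (hij : |i - j| ≤ 2 ^ k) {σ : Set X}
    (hσ : IsGeodesic σ (o i) (o j)) {p : X} (hp : p ∈ σ) :
    infDist p (Set.range o) ≤ C + δ * k := by
  induction k generalizing i j σ p with
  | zero =>
    have hij' : dist i j ≤ 1 := by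
      rw [Int.dist_eq]
      exact_mod_cast hij
    calc infDist p (Set.range o)
        ≤ dist p (o i) := infDist_le_dist_of_mem ⟨i, rfl⟩
      _ ≤ dist (o i) (o j) := dist_comm p (o i) ▸ hσ.dist_left_le hp
      _ ≤ C * dist i j := hC.dist_le_mul i j
      _ ≤ C + δ * (0 : ℕ) := by simpa using mul_le_of_le_one_right C.coe_nonneg hij'
  | succ k ih =>
    obtain ⟨m, him, hjm⟩ : ∃ m : ℤ, |i - m| ≤ 2 ^ k ∧ |j - m| ≤ 2 ^ k := by
      rw [pow_succ] at hij
      exact ⟨(i + j) / 2, by grind, by grind⟩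
    obtain ⟨τ₁, hτ₁⟩ := hX (o j) (o m)
    obtain ⟨τ₂, hτ₂⟩ := hX (o i) (o m)
    obtain ⟨q, hq, hpq⟩ := hslim _ _ _ σ τ₁ τ₂ hσ hτ₁ hτ₂.symm p hp
    have hq' : infDist q (Set.range o) ≤ C + δ * k := hq.elim (ih hjm hτ₁) (ih him hτ₂)
    push_cast
    linarith [infDist_le_infDist_add_dist (s := Set.range o) (x := p) (y := q)]

lemma infDist_range_le_logb (hX : GeodesicSpace X) (hslim : SlimTriangles X δ)
    (hC : LipschitzWith C o) {D : ℝ} (hD : 1 ≤ D) {i j : ℤ} (hij : dist i j ≤ D) {σ : Set X}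
    (hσ : IsGeodesic σ (o i) (o j)) {p : X} (hp : p ∈ σ) :
    infDist p (Set.range o) ≤ C + δ * (Real.logb 2 D + 1) := by
  have hδ₀ : 0 ≤ δ := (hX p p).elim fun _ => hslim.nonneg
  have hij' : |i - j| ≤ 2 ^ ⌈Real.logb 2 D⌉₊ := by
    have hpow : D ≤ 2 ^ ⌈Real.logb 2 D⌉₊ := by
      rw [← Real.rpow_natCast, ← Real.logb_le_iff_le_rpow one_lt_two (by linarith)]
      exact Nat.le_ceil _
    rw [Int.dist_eq] at hij
    exact_mod_cast hij.trans hpow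
  refine (infDist_range_le_of_abs_sub_le_two_pow hX hslim hC _ hij' hσ hp).trans ?_
  gcongr
  exact (Nat.ceil_lt_add_one (Real.logb_nonneg one_lt_two hD)).le

lemma infDist_range_le_logb_of_forall_infDist_le (hX : GeodesicSpace X) (hslim : SlimTriangles X δ)
    (hC : LipschitzWith C o) (hK : AntilipschitzWith K o) {x y p : X} {σ : Set X}
    (hx : x ∈ Set.range o) (hy : y ∈ Set.range o) (hσ : IsGeodesic σ x y) (hp : p ∈ σ)
    (hmax : ∀ q ∈ σ, infDist q (Set.range o) ≤ infDist p (Set.range o)) :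
    infDist p (Set.range o) ≤
      C + 1 + 3 * δ + δ * Real.logb 2 (6 * (K + 1) * infDist p (Set.range o) + 2 * (K + 1)) := by
  set R := infDist p (Set.range o)
  have hR : 0 ≤ R := infDist_nonneg
  have hK₀ : (0 : ℝ) ≤ K := K.coe_nonneg
  set D : ℝ := 6 * (K + 1) * R + 2 * (K + 1)
  have hD : 1 ≤ D := by nlinarith [mul_nonneg hK₀ hR]
  have hδ₀ : 0 ≤ δ := (hX p p).elim fun _ => hslim.nonneg
  have hlog : 0 ≤ δ * Real.logb 2 D := mul_nonneg hδ₀ (Real.logb_nonneg one_lt_two hD)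
  have hbound : R ≤ max 1 (C + δ * (Real.logb 2 D + 1)) + 2 * δ := by
    refine hσ.infDist_le_of_forall_infDist_le hX hslim hx hy hp hmax ?_
    rintro _ ⟨i, rfl⟩ _ ⟨j, rfl⟩ hij τ hτ q hq
    refine infDist_range_le_logb hX hslim hC hD ?_ hτ hq
    calc dist i j ≤ K * dist (o i) (o j) := hK.le_mul_dist i j
      _ ≤ (K + 1) * (6 * R + 2) := by gcongr; exact le_add_of_nonneg_right zero_le_one
      _ = D := by ring
  refine hbound.trans ?_
  rw [← le_sub_iff_add_le]
  exact max_le (by linarith [C.coe_nonneg]) (by linarith)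

lemma exists_forall_isQuasiconvex_range.{u} (δ : ℝ) (C K : ℝ≥0) :
    ∃ R : ℝ, ∀ (X : Type u) [MetricSpace X], GeodesicSpace X → SlimTriangles X δ →
      ∀ o : ℤ → X, LipschitzWith C o → AntilipschitzWith K o → IsQuasiconvex R (Set.range o) := by
  obtain ⟨R, hR⟩ := exists_forall_le_of_le_add_mul_logb (a := 6 * (K + 1)) (by positivity)
    (2 * (K + 1)) (C + 1 + 3 * δ) δ 2
  refine ⟨R, fun X _ hX hslim o hC hK x hx y hy σ hσ q hq => ?_⟩
  obtain ⟨p, hp, hmax⟩ := hσ.isCompact.exists_isMaxOn ⟨q, hq⟩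
    (continuous_infDist_pt (Set.range o)).continuousOn
  exact (hmax hq).trans
    (hR _ (infDist_range_le_logb_of_forall_infDist_le hX hslim hC hK hx hy hσ hp fun _ h => hmax h))

end BiLipschitz

section Orbits

variable {X : Type*} [MetricSpace X] (h : X ≃ᵢ X) (x : X)

lemma dist_zpow_add_zpow_add (y : X) (k i j : ℤ) :
    dist ((h ^ (k + i)) x) ((h ^ (k + j)) y) = dist ((h ^ i) x) ((h ^ j) y) := by
  rw [zpow_add, zpow_add]
  exact (h ^ k).isometry.dist_eq _ _

lemma dist_zpow_zpow_eq_dist_pow_natAbs (i j : ℤ) :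
    dist ((h ^ i) x) ((h ^ j) x) = dist x ((h ^ (i - j).natAbs) x) := by
  wlog hij : i ≤ j generalizing i j
  · rw [dist_comm, this j i (le_of_not_ge hij), ← Int.natAbs_neg, neg_sub]
  obtain ⟨m, rfl⟩ := Int.le.dest hij
  simpa using dist_zpow_add_zpow_add h x x i 0 m

lemma subadditive_dist_pow : Subadditive fun m : ℕ => dist x ((h ^ m) x) := fun m k =>
  calc dist x ((h ^ (m + k)) x)
      ≤ dist x ((h ^ m) x) + dist ((h ^ m) x) ((h ^ (m + k)) x) := dist_triangle _ _ _
    _ = dist x ((h ^ m) x) + dist x ((h ^ k) x) := by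
      rw [pow_add]
      exact congrArg _ ((h ^ m).isometry.dist_eq _ _)

lemma dist_pow_le_mul (m : ℕ) : dist x ((h ^ m) x) ≤ m * dist x (h x) := by
  simpa using (subadditive_dist_pow h x).apply_mul_add_le m 1 0

lemma mul_le_dist_pow {L : ℝ} (hL : Tendsto (fun m : ℕ => dist x ((h ^ m) x) / m) atTop (nhds L))
    (m : ℕ) : L * m ≤ dist x ((h ^ m) x) := by
  rcases m.eq_zero_or_pos with rfl | hm
  · simp
  have hbdd : BddBelow (Set.range fun m : ℕ => dist x ((h ^ m) x) / m) :=
    ⟨0, Set.forall_mem_range.2 fun m => by positivity⟩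
  rw [← le_div_iff₀ (Nat.cast_pos.2 hm),
    tendsto_nhds_unique hL ((subadditive_dist_pow h x).tendsto_lim hbdd)]
  exact (subadditive_dist_pow h x).lim_le_div hbdd hm.ne'

variable {h x}

lemma lipschitzWith_zpow_orbit {C : ℝ} (hC : dist x (h x) ≤ C) :
    LipschitzWith C.toNNReal fun m : ℤ => (h ^ m) x := by
  refine LipschitzWith.of_dist_le_mul fun i j => ?_
  rw [dist_zpow_zpow_eq_dist_pow_natAbs, Real.coe_toNNReal C (dist_nonneg.trans hC), Int.dist_eq,
    ← Int.cast_sub, ← Int.cast_abs, ← Nat.cast_natAbs, mul_comm]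
  exact (dist_pow_le_mul h x _).trans (by gcongr)

lemma antilipschitzWith_zpow_orbit {ε L : ℝ} (hε : 0 < ε)
    (hL : Tendsto (fun m : ℕ => dist x ((h ^ m) x) / m) atTop (nhds L)) (hεL : ε ≤ L) :
    AntilipschitzWith ε⁻¹.toNNReal fun m : ℤ => (h ^ m) x := by
  refine AntilipschitzWith.of_le_mul_dist fun i j => ?_
  rw [dist_zpow_zpow_eq_dist_pow_natAbs, Real.coe_toNNReal _ (inv_nonneg.2 hε.le), Int.dist_eq,
    ← Int.cast_sub, ← Int.cast_abs, ← Nat.cast_natAbs, le_inv_mul_iff₀ hε]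
  exact le_trans (by gcongr) (mul_le_dist_pow h x hL _)

lemma hausdorffEDist_range_zpow_le {x' : X} {i j : ℤ} {r : ℝ}
    (hij : dist ((h ^ i) x) ((h ^ j) x') ≤ r) :
    hausdorffEDist (Set.range fun m : ℤ => (h ^ m) x) (Set.range fun m : ℤ => (h ^ m) x') ≤
      ENNReal.ofReal r := by
  have htranslate (k : ℤ) : edist ((h ^ (k + i)) x) ((h ^ (k + j)) x') ≤ ENNReal.ofReal r := by
    rw [edist_dist, dist_zpow_add_zpow_add]
    exact ENNReal.ofReal_le_ofReal hij
  refine hausdorffEDist_le_of_mem_edist ?_ ?_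
  · rintro _ ⟨m, rfl⟩
    exact ⟨_, ⟨m - i + j, rfl⟩, by simpa using htranslate (m - i)⟩
  · rintro _ ⟨m, rfl⟩
    exact ⟨_, ⟨m - j + i, rfl⟩, by simpa [edist_comm] using htranslate (m - j)⟩

end Orbits

/-- There is a constant `K = K(δ, n, ε)` such that for any isometry `h` of a geodesic
space with δ-slim triangles whose stable translation length is at least `ε`, any two
points moved at most `2nδ` by `h` have `h`-orbits at Hausdorff distance at most `K`. -/
theorem close_orbits.{u}
    (δ ε : ℝ) (hδ : 0 < δ) (hε : 0 < ε) (n : ℕ) (hn : 0 < n) :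
    ∃ K : ℝ, ∀ (X : Type u) [MetricSpace X],
      GeodesicSpace X → SlimTriangles X δ →
      ∀ h : X ≃ᵢ X,
        (∀ y : X, ∃ L : ℝ,
          Filter.Tendsto (fun m : ℕ => dist y ((h ^ m) y) / m) Filter.atTop (nhds L) ∧
            ε ≤ L) →
        ∀ x x' : X, dist x (h x) ≤ 2 * n * δ → dist x' (h x') ≤ 2 * n * δ →
          EMetric.hausdorffEdist
              (Set.range fun m : ℤ => (h ^ m) x)
              (Set.range fun m : ℤ => (h ^ m) x') ≤ ENNReal.ofReal K := by
  obtain ⟨R, hR⟩ := exists_forall_isQuasiconvex_range.{u} δ (2 * n * δ).toNNReal ε⁻¹.toNNReal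
  refine ⟨2 * R + 2 * δ + 1, fun X _ hX hslim h hL x x' hx hx' => ?_⟩
  have hquasiconvex (y : X) (hy : dist y (h y) ≤ 2 * n * δ) :
      IsQuasiconvex R (Set.range fun m : ℤ => (h ^ m) y) := by
    obtain ⟨L, hlim, hεL⟩ := hL y
    exact hR X hX hslim _ (lipschitzWith_zpow_orbit hy) (antilipschitzWith_zpow_orbit hε hlim hεL)
  obtain ⟨N, hN⟩ : ∃ N : ℕ, 2 * (2 * δ + dist x x') < dist x ((h ^ N) x) := by
    obtain ⟨L, hlim, hεL⟩ := hL x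
    obtain ⟨N, hN⟩ := exists_nat_gt (2 * (2 * δ + dist x x') / L)
    rw [div_lt_iff₀' (hε.trans_le hεL)] at hN
    exact ⟨N, hN.trans_le (mul_le_dist_pow h x hlim N)⟩
  obtain ⟨_, ⟨i, rfl⟩, _, ⟨j, rfl⟩, hij⟩ :=
    (hquasiconvex x hx).exists_dist_lt (hquasiconvex x' hx') hX hslim
      ⟨0, rfl⟩ ⟨N, rfl⟩ ⟨0, rfl⟩ ⟨N, rfl⟩ hN (by simpa [IsometryEquiv.dist_eq] using hN)
      (show R + R + 2 * δ < 2 * R + 2 * δ + 1 by linarith)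
  exact hausdorffEDist_range_zpow_le hij.le
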